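/- Let G be a group, let M be a nonempty compact Hausdorff G-space on which the action is minimal, and let B be a G-boundary, i.e. a nonempty compact Hausdorff G-space on which the action is minimal and strongly proximal. Then there is at most one unital positive G-equivariant linear map from C(B,ℝ) to C(M,ℝ), and if such a map exists, it is multiplicative (a unital ring homomorphism) and injective. -/

import Mathlib

open MeasureTheory

open Filter Topology in
/-- A unital positive linear functional on `C(B, ℝ)` is integration against a regular Borel
probability measure. -/
theorem exists_regular_probabilityMeasure_of_positive {B : Type*} [TopologicalSpace B]
    [CompactSpace B] [T2Space B] [MeasurableSpace B] [BorelSpace B] (L : C(B, ℝ) →ₗ[ℝ] ℝ)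
    (h1 : L 1 = 1) (hpos : ∀ f : C(B, ℝ), (∀ b, 0 ≤ f b) → 0 ≤ L f) :
    ∃ ν : ProbabilityMeasure B, (ν : Measure B).Regular ∧
      ∀ f : C(B, ℝ), ∫ b, f b ∂(ν : Measure B) = L f := by
  let Λ : CompactlySupportedContinuousMap B ℝ →ₚ[ℝ] ℝ := PositiveLinearMap.mk₀
    { toFun := fun f => L f.toContinuousMap
      map_add' := fun f g => L.map_add f.toContinuousMap g.toContinuousMap
      map_smul' := fun c f => L.map_smul c f.toContinuousMap }
    fun f hf => hpos f.toContinuousMap fun b => hf b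
  have hint (f : C(B, ℝ)) : ∫ b, f b ∂(RealRMK.rieszMeasure Λ) = L f :=
    RealRMK.integral_rieszMeasure Λ (CompactlySupportedContinuousMap.continuousMapEquiv f)
  have hprob : IsProbabilityMeasure (RealRMK.rieszMeasure Λ) := by
    have h := hint 1
    simp only [ContinuousMap.one_apply, integral_const, smul_eq_mul, mul_one, h1] at h
    exact ⟨(ENNReal.toReal_eq_one_iff _).1 h⟩
  exact ⟨⟨RealRMK.rieszMeasure Λ, hprob⟩, RealRMK.regular_rieszMeasure Λ, hint⟩

open Filter Topology in
/-- If `B` is strongly proximal, then a unital positive equivariant map `C(B, ℝ) → C(M, ℝ)`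
with `M` compact restricts to evaluation at a point of `B` along some orbit in `M`. -/
theorem exists_forall_apply_smul_eq {G M B : Type*} [Group G]
    [TopologicalSpace M] [CompactSpace M] [Nonempty M] [MulAction G M]
    [TopologicalSpace B] [CompactSpace B] [T2Space B] [MulAction G B] [ContinuousConstSMul G B]
    [MeasurableSpace B] [BorelSpace B]
    (hsp : ∀ ν : ProbabilityMeasure B, (ν : Measure B).Regular →
      ∃ x : B, (⟨Measure.dirac x, inferInstance⟩ : ProbabilityMeasure B) ∈
        closure {μ : ProbabilityMeasure B | ∃ s : G,
          μ = ν.map ((continuous_const_smul s).measurable.aemeasurable :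
            AEMeasurable (fun y : B => s • y) (ν : Measure B))})
    (φ : C(B, ℝ) →ₗ[ℝ] C(M, ℝ)) (h1 : φ 1 = 1)
    (hpos : ∀ f : C(B, ℝ), (∀ b, 0 ≤ f b) → ∀ x : M, 0 ≤ φ f x)
    (hequiv : ∀ (s : G) (f : C(B, ℝ)) (x : M),
      φ (f.comp ⟨fun b => s⁻¹ • b, continuous_const_smul s⁻¹⟩) x = φ f (s⁻¹ • x)) :
    ∃ (y : M) (b : B), ∀ (s : G) (f : C(B, ℝ)), φ f (s • y) = f (s • b) := by
  have hequiv' (s : G) (f : C(B, ℝ)) (x : M) :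
      φ (f.comp ⟨fun b => s • b, continuous_const_smul s⟩) x = φ f (s • x) := by
    simpa only [inv_inv] using hequiv s⁻¹ f x
  obtain ⟨x⟩ := ‹Nonempty M›
  obtain ⟨ν, hreg, hν⟩ := exists_regular_probabilityMeasure_of_positive
    ((ContinuousMap.evalCLM ℝ x : C(M, ℝ) →L[ℝ] ℝ).toLinearMap ∘ₗ φ) (by simp [h1])
    fun f hf => hpos f hf x
  obtain ⟨b, hb⟩ := hsp ν hreg
  let u : G → ProbabilityMeasure B := fun s =>
    ν.map (continuous_const_smul s).measurable.aemeasurable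
  have hset : {μ : ProbabilityMeasure B | ∃ s : G, μ = u s} = Set.range u := by
    ext μ
    simp [eq_comm]
  change _ ∈ closure {μ : ProbabilityMeasure B | ∃ s : G, μ = u s} at hb
  rw [hset] at hb
  obtain ⟨V, hV, hVb⟩ := mem_closure_iff_ultrafilter.1 hb
  have : (comap u (V : Filter (ProbabilityMeasure B))).NeBot :=
    comap_neBot_iff_compl_range.2 (V.compl_notMem_iff.2 hV)
  let U : Ultrafilter G := Ultrafilter.of (comap u V)
  have hU : Tendsto u U (𝓝 ⟨Measure.dirac b, inferInstance⟩) :=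
    (tendsto_iff_comap.2 (Ultrafilter.of_le _)).mono_right hVb
  obtain ⟨y, -, hy⟩ := isCompact_univ.ultrafilter_le_nhds (U.map fun s : G => s • x) (by simp)
  have hy : Tendsto (fun s : G => s • x) U (𝓝 y) := hy
  have hpt (f : C(B, ℝ)) : φ f y = f b := by
    refine tendsto_nhds_unique ((φ f).continuous.continuousAt.tendsto.comp hy) ?_
    have h := ProbabilityMeasure.tendsto_iff_forall_integral_tendsto.1 hU
      (BoundedContinuousFunction.mkOfCompact f)
    simp only [BoundedContinuousFunction.mkOfCompact_apply, ProbabilityMeasure.coe_mk,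
      integral_dirac] at h
    refine h.congr fun s => ?_
    rw [ProbabilityMeasure.toMeasure_map, integral_map
      (continuous_const_smul s).measurable.aemeasurable f.continuous.aestronglyMeasurable]
    exact (hν (f.comp ⟨fun b => s • b, continuous_const_smul s⟩)).trans (hequiv' s f x)
  exact ⟨y, b, fun s f => by rw [← hequiv', hpt]; rfl⟩

/-- If `M` is a minimal compact Hausdorff `G`-space and `B` is a `G`-boundary (a nonempty
compact Hausdorff `G`-space whose action is minimal and strongly proximal), then there is
at most one unital positive `G`-equivariant linear map `C(B,ℝ) → C(M,ℝ)`, and any such map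
is multiplicative and injective. -/
theorem stmt_13 {G M B : Type*} [Group G]
    [TopologicalSpace M] [CompactSpace M] [T2Space M] [Nonempty M]
    [MulAction G M] [ContinuousConstSMul G M]
    [TopologicalSpace B] [CompactSpace B] [T2Space B] [Nonempty B]
    [MulAction G B] [ContinuousConstSMul G B]
    [MeasurableSpace B] [BorelSpace B]
    (hminM : ∀ y : M, Dense (Set.range fun s : G => s • y))
    (hminB : ∀ y : B, Dense (Set.range fun s : G => s • y))
    (hsp : ∀ ν : ProbabilityMeasure B, (ν : Measure B).Regular →
      ∃ x : B, (⟨Measure.dirac x, inferInstance⟩ : ProbabilityMeasure B) ∈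
        closure {μ : ProbabilityMeasure B | ∃ s : G,
          μ = ν.map ((continuous_const_smul s).measurable.aemeasurable :
            AEMeasurable (fun y : B => s • y) (ν : Measure B))}) :
    (∀ φ₁ φ₂ : C(B, ℝ) →ₗ[ℝ] C(M, ℝ),
      (φ₁ 1 = 1) → (∀ f : C(B, ℝ), (∀ b, 0 ≤ f b) → ∀ x : M, 0 ≤ φ₁ f x) →
      (∀ (s : G) (f : C(B, ℝ)) (x : M),
        φ₁ (f.comp ⟨fun b => s⁻¹ • b, continuous_const_smul s⁻¹⟩) x = φ₁ f (s⁻¹ • x)) →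
      (φ₂ 1 = 1) → (∀ f : C(B, ℝ), (∀ b, 0 ≤ f b) → ∀ x : M, 0 ≤ φ₂ f x) →
      (∀ (s : G) (f : C(B, ℝ)) (x : M),
        φ₂ (f.comp ⟨fun b => s⁻¹ • b, continuous_const_smul s⁻¹⟩) x = φ₂ f (s⁻¹ • x)) →
      φ₁ = φ₂)
    ∧
    (∀ φ : C(B, ℝ) →ₗ[ℝ] C(M, ℝ),
      (φ 1 = 1) → (∀ f : C(B, ℝ), (∀ b, 0 ≤ f b) → ∀ x : M, 0 ≤ φ f x) →
      (∀ (s : G) (f : C(B, ℝ)) (x : M),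
        φ (f.comp ⟨fun b => s⁻¹ • b, continuous_const_smul s⁻¹⟩) x = φ f (s⁻¹ • x)) →
      (∀ f g : C(B, ℝ), φ (f * g) = φ f * φ g) ∧ Function.Injective φ) := by
  have hmain (φ : C(B, ℝ) →ₗ[ℝ] C(M, ℝ)) (h1 : φ 1 = 1)
      (hpos : ∀ f : C(B, ℝ), (∀ b, 0 ≤ f b) → ∀ x : M, 0 ≤ φ f x)
      (hequiv : ∀ (s : G) (f : C(B, ℝ)) (x : M),
        φ (f.comp ⟨fun b => s⁻¹ • b, continuous_const_smul s⁻¹⟩) x = φ f (s⁻¹ • x)) :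
      (∀ f g : C(B, ℝ), φ (f * g) = φ f * φ g) ∧ Function.Injective φ := by
    obtain ⟨y, b, hyb⟩ := exists_forall_apply_smul_eq hsp φ h1 hpos hequiv
    refine ⟨fun f g => DFunLike.coe_injective ?_,
      (injective_iff_map_eq_zero φ).2 fun f hf => DFunLike.coe_injective ?_⟩
    · refine (φ (f * g)).continuous.ext_on (hminM y) (φ f * φ g).continuous ?_
      rintro _ ⟨s, rfl⟩
      simp [hyb]
    · refine f.continuous.ext_on (hminB b) (0 : C(B, ℝ)).continuous ?_
      rintro _ ⟨s, rfl⟩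
      simp [← hyb, hf]
  refine ⟨fun φ₁ φ₂ h1 hp1 he1 h2 hp2 he2 => ?_, hmain⟩
  have hm := (hmain ((2⁻¹ : ℝ) • (φ₁ + φ₂)) ?_ ?_ ?_).1
  · ext f x
    have h := congrArg (fun k : C(M, ℝ) => k x) (hm f f)
    simp only [LinearMap.smul_apply, LinearMap.add_apply, (hmain φ₁ h1 hp1 he1).1,
      (hmain φ₂ h2 hp2 he2).1, ContinuousMap.smul_apply, ContinuousMap.add_apply,
      ContinuousMap.mul_apply, smul_eq_mul] at h
    have hsq : (φ₁ f x - φ₂ f x) ^ 2 = 0 := by linear_combination 4 * h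
    exact sub_eq_zero.1 (pow_eq_zero_iff two_ne_zero |>.1 hsq)
  · ext x
    norm_num [h1, h2]
  · intro f hf x
    have := hp1 f hf x
    have := hp2 f hf x
    simp only [LinearMap.smul_apply, LinearMap.add_apply, ContinuousMap.smul_apply,
      ContinuousMap.add_apply, smul_eq_mul]
    positivity
  · intro s f x
    simp [he1, he2]
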